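/- arXiv:2409.04554 — 8 statements merged into one kernel-verified Lean document; each statement's English description precedes it below -/
import Mathlib

section
/- Let N be a finite set, C a finite family of subsets of N, and let S ∈ C be minimal in C (no T ∈ C satisfies T ⊊ S). Then there exists a binary point (x,y) ∈ {0,1}^N × {0,1} such that (x,y) ∈ P̄(C \ {S}) but (x,y) ∉ P̄(C). In fact one may take y = 1, x_j = 0 for j ∈ S and x_j = 1 for j ∉ S. -/
/-- The polytope `P̄(C) = {(x,y) ∈ [0,1]^N × [0,1] : ∑_{j∈S} x_j ≥ y for all S ∈ C}`. -/
def Pbar {N : Type*} [Fintype N] (C : Finset (Finset N)) : Set ((N → ℝ) × ℝ) :=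
  {p | (∀ j, p.1 j ∈ Set.Icc (0 : ℝ) 1) ∧ p.2 ∈ Set.Icc (0 : ℝ) 1 ∧
    ∀ S ∈ C, p.2 ≤ ∑ j ∈ S, p.1 j}

/-- Proposition 1(ii) of the paper.
If `S ∈ C` is minimal in `C`, then there is a binary point `(x,y)` lying in
`P̄(C \ {S})` but not in `P̄(C)`; in fact one may take `y = 1`, `x_j = 0` for `j ∈ S`
and `x_j = 1` for `j ∉ S`. -/
theorem stmt_2 {N : Type*} [Fintype N] [DecidableEq N] (C : Finset (Finset N))
    (S : Finset N) (hS : S ∈ C) (hmin : ∀ T ∈ C, ¬ T ⊂ S) :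
    ∃ p : (N → ℝ) × ℝ,
      (∀ j, p.1 j = 0 ∨ p.1 j = 1) ∧ (p.2 = 0 ∨ p.2 = 1) ∧
      p ∈ Pbar (C.erase S) ∧ p ∉ Pbar C ∧
      p = ((fun j => if j ∈ S then (0 : ℝ) else 1), (1 : ℝ)) := by
  refine ⟨_, fun j => ?_, Or.inr rfl, ⟨fun j => ?_, by simp, fun T hT => ?_⟩, fun h => ?_, rfl⟩
  · by_cases hj : j ∈ S <;> simp [hj]
  · by_cases hj : j ∈ S <;> simp [hj]
  · obtain ⟨hne, hTC⟩ := Finset.mem_erase.mp hT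
    have hsub : ¬ T ⊆ S := fun h => hmin T hTC (h.ssubset_of_ne hne)
    obtain ⟨j, hjT, hjS⟩ := Finset.not_subset.mp hsub
    have hle := Finset.single_le_sum (f := fun j => if j ∈ S then (0 : ℝ) else 1)
      (fun i _ => by split_ifs <;> norm_num) hjT
    simpa only [if_neg hjS] using hle
  · have hle := h.2.2 S hS
    have hsum : ∑ j ∈ S, (if j ∈ S then (0 : ℝ) else 1) = 0 :=
      Finset.sum_eq_zero fun j hj => if_pos hj
    exact absurd (hle.trans_eq hsum) (by norm_num)
end

section
/- Let N be a finite set, C a finite family of nonempty subsets of N, and let S ∈ C be minimal in C (no T ∈ C satisfies T ⊊ S). Then the inequality ∑_{j∈S} x_j ≥ y is valid for all (x,y) ∈ P̄(C) ∩ ({0,1}^N × {0,1}), and the following |N|+1 points are affinely independent, belong to P̄(C) ∩ ({0,1}^N × {0,1}), and satisfy ∑_{j∈S} x_j = y: the point (0,0); the points (e_j, 0) for each j ∈ N \ S; and the points (e_j + ∑_{j'∈N\S} e_{j'}, 1) for each j ∈ S, where e_j denotes the j-th unit vector. (Hence ∑_{j∈S} x_j ≥ y is facet-defining for conv(P̄(C)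 ∩ {0,1}^{|N|+1}).) -/
/-- The `|N| + 1` points used in the facet proof: `(0,0)`; `(e_j, 0)` for `j ∉ S`;
and `(e_j + ∑_{j' ∉ S} e_{j'}, 1)` for `j ∈ S`. -/
def facetPoints {N : Type*} [DecidableEq N] (S : Finset N) :
    Option N → (N → ℝ) × ℝ
  | none => (fun _ => 0, 0)
  | some j =>
      if j ∈ S then ((fun j' => if j' = j ∨ j' ∉ S then 1 else 0), 1)
      else ((fun j' => if j' = j then 1 else 0), 0)

/-- A set `T` that is not a proper subset of `S` meets `{j} ∪ Sᶜ` for every `j ∈ S`. -/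
theorem exists_mem_eq_or_notMem_of_not_ssubset {N : Type*} {S T : Finset N} (h : ¬ T ⊂ S)
    {j : N} (hj : j ∈ S) : ∃ k ∈ T, k = j ∨ k ∉ S := by
  by_contra! hc
  exact h ⟨fun k hk => (hc k hk).2, fun hST => (hc j (hST hj)).1 rfl⟩

theorem facetPoints_fst_eq_zero_or_one {N : Type*} [DecidableEq N] (S : Finset N)
    (i : Option N) (j : N) : (facetPoints S i).1 j = 0 ∨ (facetPoints S i).1 j = 1 := by
  rcases i with _ | i
  · simp [facetPoints]
  · by_cases hi : i ∈ S
    · simp only [facetPoints, hi, if_true]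
      split_ifs <;> simp
    · simp only [facetPoints, hi, if_false]
      split_ifs <;> simp

theorem facetPoints_snd_eq_zero_or_one {N : Type*} [DecidableEq N] (S : Finset N)
    (i : Option N) : (facetPoints S i).2 = 0 ∨ (facetPoints S i).2 = 1 := by
  rcases i with _ | i
  · simp [facetPoints]
  · by_cases hi : i ∈ S <;> simp [facetPoints, hi]

theorem sum_facetPoints_fst {N : Type*} [DecidableEq N] (S : Finset N) (i : Option N) :
    ∑ j ∈ S, (facetPoints S i).1 j = (facetPoints S i).2 := by
  rcases i with _ | i
  · simp [facetPoints]
  · by_cases hi : i ∈ S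
    · simp only [facetPoints, hi, if_true]
      rw [Finset.sum_eq_single_of_mem i hi]
      · simp
      · intro b hb hbi
        simp [hb, hbi]
    · simp [facetPoints, hi]

theorem facetPoints_mem_Pbar {N : Type*} [Fintype N] [DecidableEq N] {C : Finset (Finset N)}
    {S : Finset N} (hmin : ∀ T ∈ C, ¬ T ⊂ S) (i : Option N) : facetPoints S i ∈ Pbar C := by
  have hfst (j : N) : (facetPoints S i).1 j ∈ Set.Icc (0 : ℝ) 1 := by
    rcases facetPoints_fst_eq_zero_or_one S i j with h | h <;> simp [h]
  refine ⟨hfst, ?_, fun T hT => ?_⟩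
  · rcases facetPoints_snd_eq_zero_or_one S i with h | h <;> simp [h]
  · rcases facetPoints_snd_eq_zero_or_one S i with h | h
    · rw [h]
      exact Finset.sum_nonneg fun j _ => (hfst j).1
    · rcases i with _ | i
      · simp [facetPoints] at h
      · have hi : i ∈ S := by
          by_contra hi
          simp [facetPoints, hi] at h
        obtain ⟨k, hkT, hk⟩ := exists_mem_eq_or_notMem_of_not_ssubset (hmin T hT) hi
        calc (facetPoints S (some i)).2 = (facetPoints S (some i)).1 k := by
              simp [facetPoints, hi, hk]
          _ ≤ ∑ j ∈ T, (facetPoints S (some i)).1 j :=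
              Finset.single_le_sum (fun j _ => (hfst j).1) hkT

theorem affineIndependent_facetPoints {N : Type*} [Fintype N] [DecidableEq N]
    (S : Finset N) : AffineIndependent ℝ (facetPoints S) := by
  rw [affineIndependent_iff_of_fintype]
  intro w hw h
  rw [Finset.weightedVSub_eq_linear_combination _ hw, Fintype.sum_option] at h
  rw [Fintype.sum_option] at hw
  have hcoord (k : N) : ∑ j, w (some j) * (facetPoints S (some j)).1 k = 0 := by
    have hnone : (facetPoints S none).1 k = 0 := rfl
    simpa [hnone, Prod.fst_sum] using congrFun (congrArg Prod.fst h) k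
  have hmem (k : N) (hk : k ∈ S) : w (some k) = 0 := by
    rw [← hcoord k, Fintype.sum_eq_single k]
    · simp [facetPoints, hk]
    · intro j hj
      by_cases hjS : j ∈ S <;> simp [facetPoints, hjS, hk, hj.symm]
  have hsome (k : N) : w (some k) = 0 := by
    by_cases hk : k ∈ S
    · exact hmem k hk
    · rw [← hcoord k, Fintype.sum_eq_single k]
      · simp [facetPoints, hk]
      · intro j hj
        by_cases hjS : j ∈ S
        · simp [hmem j hjS]
        · simp [facetPoints, hjS, hj.symm]
  rintro (_ | k)
  · simpa [hsome] using hw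
  · exact hsome k

/-- Proposition 1(iii) of the paper.
Let `C` be a finite family of nonempty subsets of the finite set `N` and `S ∈ C` be minimal.
Then `∑_{j∈S} x_j ≥ y` is valid for all binary points of `P̄(C)`, and the `|N| + 1`
points `facetPoints S` are binary, belong to `P̄(C)`, satisfy `∑_{j∈S} x_j = y`,
and are affinely independent (hence the inequality is facet-defining for the
convex hull of the binary points of `P̄(C)`). -/
theorem stmt_3 {N : Type*} [Fintype N] [DecidableEq N] (C : Finset (Finset N))
    (hne : ∀ T ∈ C, T.Nonempty) (S : Finset N) (hS : S ∈ C)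
    (hmin : ∀ T ∈ C, ¬ T ⊂ S) :
    (∀ p ∈ Pbar C, (∀ j, p.1 j = 0 ∨ p.1 j = 1) → (p.2 = 0 ∨ p.2 = 1) →
        p.2 ≤ ∑ j ∈ S, p.1 j) ∧
    (∀ i : Option N,
        facetPoints S i ∈ Pbar C ∧
        (∀ j, (facetPoints S i).1 j = 0 ∨ (facetPoints S i).1 j = 1) ∧
        ((facetPoints S i).2 = 0 ∨ (facetPoints S i).2 = 1) ∧
        (∑ j ∈ S, (facetPoints S i).1 j) = (facetPoints S i).2) ∧
    AffineIndependent ℝ (facetPoints S) := by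
  exact ⟨fun p hp _ _ => hp.2.2 S hS,
    fun i => ⟨facetPoints_mem_Pbar hmin i, facetPoints_fst_eq_zero_or_one S i,
      facetPoints_snd_eq_zero_or_one S i, sum_facetPoints_fst S i⟩,
    affineIndependent_facetPoints S⟩
end

section
/- Let N be a finite set and C a finite family of subsets of N. If (x*, y*) is an extreme point (vertex) of the polytope P̄(C) = {(x,y) ∈ [0,1]^N × [0,1] : ∑_{j∈S} x_j ≥ y for every S ∈ C}, then y* ∈ {0,1}. -/
/-- Rescaling a point with `0 < y` by `1 / y` and truncating `x` at `1` stays in `Pbar C`. -/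
lemma truncate_mem_Pbar {N : Type*} [Fintype N] {C : Finset (Finset N)} {x : N → ℝ} {y : ℝ}
    (h : (x, y) ∈ Pbar C) (hy : 0 < y) : ((fun j => min (x j / y) 1), (1 : ℝ)) ∈ Pbar C := by
  obtain ⟨hx, -, hS⟩ := h
  have hnn : ∀ j, 0 ≤ min (x j / y) 1 := fun j =>
    le_min (div_nonneg (hx j).1 hy.le) zero_le_one
  refine ⟨fun j => ⟨hnn j, min_le_right _ _⟩, ⟨zero_le_one, le_rfl⟩, fun S hSC => ?_⟩
  change (1 : ℝ) ≤ ∑ j ∈ S, min (x j / y) 1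
  by_cases hex : ∃ j ∈ S, 1 ≤ x j / y
  · obtain ⟨j, hj, hle⟩ := hex
    calc (1 : ℝ) = min (x j / y) 1 := (min_eq_right hle).symm
      _ ≤ ∑ j ∈ S, min (x j / y) 1 :=
        Finset.single_le_sum (f := fun j => min (x j / y) 1) (fun i _ => hnn i) hj
  · push Not at hex
    rw [Finset.sum_congr rfl fun j hj => min_eq_left (hex j hj).le, ← Finset.sum_div,
      le_div_iff₀ hy, one_mul]
    exact hS S hSC

/-- The excess of `x` over `y`, rescaled by `1 / (1 - y)`, lies in the face `y = 0` of `Pbar C`. -/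
lemma excess_mem_Pbar {N : Type*} [Fintype N] {C : Finset (Finset N)} {x : N → ℝ} {y : ℝ}
    (h : (x, y) ∈ Pbar C) (hy : y < 1) :
    ((fun j => max (x j - y) 0 / (1 - y)), (0 : ℝ)) ∈ Pbar C := by
  have hy' : 0 < 1 - y := sub_pos.2 hy
  have hnn : ∀ j, 0 ≤ max (x j - y) 0 / (1 - y) := fun j =>
    div_nonneg (le_max_right _ _) hy'.le
  refine ⟨fun j => ⟨hnn j, ?_⟩, ⟨le_rfl, zero_le_one⟩, fun S _ => Finset.sum_nonneg fun j _ => hnn j⟩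
  exact (div_le_one hy').2 (max_le (sub_le_sub_right (h.1 j).2 y) hy'.le)

/-- Lemma 2 of the paper.
If `(x*, y*)` is an extreme point of `P̄(C)`, then `y* ∈ {0, 1}`. -/
theorem stmt_4 {N : Type*} [Fintype N] (C : Finset (Finset N))
    (p : (N → ℝ) × ℝ) (hp : p ∈ Set.extremePoints ℝ (Pbar C)) :
    p.2 = 0 ∨ p.2 = 1 := by
  obtain ⟨x, y⟩ := p
  by_contra! hne
  obtain ⟨hmem, hext⟩ := hp
  have hy0 : 0 < y := lt_of_le_of_ne hmem.2.1.1 hne.1.symm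
  have hy1 : y < 1 := lt_of_le_of_ne hmem.2.1.2 hne.2
  have hseg : (x, y) ∈ openSegment ℝ ((fun j => min (x j / y) 1), (1 : ℝ))
      ((fun j => max (x j - y) 0 / (1 - y)), (0 : ℝ)) := by
    refine ⟨y, 1 - y, hy0, sub_pos.2 hy1, by ring, Prod.ext (funext fun j => ?_) (by simp)⟩
    change y * min (x j / y) 1 + (1 - y) * (max (x j - y) 0 / (1 - y)) = x j
    rw [mul_div_cancel₀ _ (sub_pos.2 hy1).ne', mul_min_of_nonneg _ _ hy0.le,
      mul_div_cancel₀ _ hy0.ne', mul_one]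
    rcases le_total (x j) y with hle | hle
    · simp [hle]
    · simp [hle]
  exact hne.2 (congrArg Prod.snd
    (hext (truncate_mem_Pbar hmem hy0) (excess_mem_Pbar hmem hy1) hseg)).symm
end

section
/- Let n be a positive integer and let C be a finite family of subsets of {1,…,n} such that every S ∈ C is an interval, i.e., a set of consecutive integers. Then the polytope P̄(C) = {(x,y) ∈ [0,1]^n × [0,1] : ∑_{j∈S} x_j ≥ y for every S ∈ C} is integral: every extreme point of P̄(C) lies in {0,1}^n × {0,1}. -/
open Filter Topology in
/-- A weak inequality survives a small perturbation whose direction respects it when tight. -/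
lemma eventually_add_mul_le {a b u v : ℝ} (hab : a ≤ b) (huv : a = b → u = v) :
    ∀ᶠ ε in 𝓝 (0 : ℝ), a + ε * u ≤ b + ε * v := by
  rcases hab.eq_or_lt with h | h
  · simp [h, huv h]
  · have h₁ : Tendsto (fun ε : ℝ => a + ε * u) (𝓝 0) (𝓝 a) := by
      have : Continuous fun ε : ℝ => a + ε * u := by fun_prop
      simpa using this.tendsto 0
    have h₂ : Tendsto (fun ε : ℝ => b + ε * v) (𝓝 0) (𝓝 b) := by
      have : Continuous fun ε : ℝ => b + ε * v := by fun_prop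
      simpa using this.tendsto 0
    exact (h₁.eventually_lt h₂ h).mono fun _ => le_of_lt

open Filter Topology in
/-- An extreme point of `Pbar C` admits no nonzero direction along which all of its tight
constraints stay tight. -/
lemma eq_zero_of_mem_extremePoints_Pbar {N : Type*} [Fintype N] {C : Finset (Finset N)}
    {p d : (N → ℝ) × ℝ} (hp : p ∈ Set.extremePoints ℝ (Pbar C))
    (hx : ∀ j, p.1 j = 0 ∨ p.1 j = 1 → d.1 j = 0) (hy : p.2 = 0 ∨ p.2 = 1 → d.2 = 0)
    (hS : ∀ S ∈ C, p.2 = ∑ j ∈ S, p.1 j → d.2 = ∑ j ∈ S, d.1 j) : d = 0 := by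
  obtain ⟨⟨hpx, hpy, hpS⟩, hext⟩ := hp
  have box : ∀ t u : ℝ, t ∈ Set.Icc (0 : ℝ) 1 → (t = 0 ∨ t = 1 → u = 0) →
      ∀ᶠ ε in 𝓝 (0 : ℝ), t + ε * u ∈ Set.Icc (0 : ℝ) 1 := by
    intro t u ht hu
    have h₁ := eventually_add_mul_le ht.1 (u := 0) (v := u) fun h => (hu (.inl h.symm)).symm
    have h₂ := eventually_add_mul_le ht.2 (u := u) (v := 0) fun h => hu (.inr h)
    filter_upwards [h₁, h₂] with ε h₁ h₂
    constructor <;> linarith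
  have key : ∀ᶠ ε in 𝓝 (0 : ℝ), p + ε • d ∈ Pbar C := by
    have h₁ := eventually_all.2 fun j => box _ _ (hpx j) (hx j)
    have h₂ := (Finset.eventually_all C).2 fun S hSC =>
      eventually_add_mul_le (hpS S hSC) (hS S hSC)
    filter_upwards [h₁, box _ _ hpy hy, h₂] with ε h₁ h₂ h₃
    refine ⟨h₁, h₂, fun S hSC => ?_⟩
    simpa [Finset.sum_add_distrib, Finset.mul_sum] using h₃ S hSC
  have key' : ∀ᶠ ε in 𝓝 (0 : ℝ), p + (-ε) • d ∈ Pbar C := by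
    have : Tendsto (fun ε : ℝ => -ε) (𝓝 0) (𝓝 0) := by simpa using (continuous_neg.tendsto (0 : ℝ))
    exact this.eventually key
  obtain ⟨ε, ⟨h₁, h₂⟩, hε⟩ :=
    (((key.and key').filter_mono nhdsWithin_le_nhds).and
      (self_mem_nhdsWithin (a := (0 : ℝ)) (s := Set.Ioi 0))).exists
  have hseg : p ∈ openSegment ℝ (p + ε • d) (p + (-ε) • d) := by
    refine ⟨1 / 2, 1 / 2, by norm_num, by norm_num, by norm_num, ?_⟩
    module
  have h := hext h₁ h₂ hseg
  exact (smul_eq_zero.1 (add_eq_left.1 h)).resolve_left (ne_of_gt hε)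

/-- Telescoping over a nonempty interval of `Fin n`. -/
lemma exists_sum_sub_eq_of_interval {n : ℕ} {S : Finset (Fin n)} (hne : S.Nonempty)
    (hS : ∀ a ∈ S, ∀ b ∈ S, ∀ c : Fin n, a ≤ c → c ≤ b → c ∈ S) :
    ∃ a b : ℕ, ∀ F : ℕ → ℝ, ∑ j ∈ S, (F (j + 1) - F j) = F b - F a := by
  refine ⟨S.min' hne, S.max' hne + 1, fun F => ?_⟩
  have hle : (S.min' hne : ℕ) ≤ S.max' hne + 1 :=
    (Fin.le_def.1 (S.min'_le _ (S.max'_mem hne))).trans (Nat.le_succ _)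
  have hmap : S.map Fin.valEmbedding = Finset.Ico (S.min' hne : ℕ) (S.max' hne + 1) := by
    ext k
    simp only [Finset.mem_map, Fin.valEmbedding_apply, Finset.mem_Ico, Nat.lt_succ_iff]
    constructor
    · rintro ⟨j, hj, rfl⟩
      exact ⟨S.min'_le j hj, S.le_max' j hj⟩
    · rintro ⟨h₁, h₂⟩
      exact ⟨⟨k, h₂.trans_lt (S.max' hne).isLt⟩,
        hS _ (S.min'_mem hne) _ (S.max'_mem hne) _ h₁ h₂, rfl⟩
  rw [← Finset.sum_Ico_sub F hle, ← hmap, Finset.sum_map]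
  rfl

/-- An extreme point of `Pbar C` with last coordinate different from `1` is integral. -/
lemma integral_of_snd_ne_one {N : Type*} [Fintype N] {C : Finset (Finset N)}
    {p : (N → ℝ) × ℝ} (hp : p ∈ Set.extremePoints ℝ (Pbar C)) (h1 : p.2 ≠ 1) :
    (∀ j, p.1 j = 0 ∨ p.1 j = 1) ∧ p.2 = 0 := by
  classical
  obtain ⟨hpx, hpy, -⟩ := hp.1
  have hd : ((fun j => if p.1 j = 1 then 0 else p.1 j, p.2) : (N → ℝ) × ℝ) = 0 := by
    refine eq_zero_of_mem_extremePoints_Pbar hp ?_ ?_ ?_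
    · rintro j (h | h) <;> simp [h]
    · exact fun h => h.resolve_right h1
    · intro S _ htight
      refine htight.trans (Finset.sum_congr rfl fun j hj => ?_)
      have hj1 : p.1 j ≤ p.2 :=
        htight ▸ Finset.single_le_sum (fun i _ => (hpx i).1) hj
      simp [(hj1.trans_lt (lt_of_le_of_ne hpy.2 h1)).ne]
  refine ⟨fun j => ?_, congrArg Prod.snd hd⟩
  have hj : (if p.1 j = 1 then 0 else p.1 j) = 0 := congrFun (congrArg Prod.fst hd) j
  split_ifs at hj with h
  · exact .inr h
  · exact .inl hj

/-- Proposition 2 of the paper.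
Let `C` be a finite family of subsets of `{1,…,n}` (modelled as `Fin n`) each of which is
an interval, i.e., a set of consecutive integers. Then the polytope `P̄(C)` is integral:
every extreme point lies in `{0,1}^n × {0,1}`. -/
theorem stmt_6 (n : ℕ) (hn : 0 < n) (C : Finset (Finset (Fin n)))
    (hC : ∀ S ∈ C, ∀ a ∈ S, ∀ b ∈ S, ∀ c : Fin n, a ≤ c → c ≤ b → c ∈ S)
    (p : (Fin n → ℝ) × ℝ) (hp : p ∈ Set.extremePoints ℝ (Pbar C)) :
    (∀ j, p.1 j = 0 ∨ p.1 j = 1) ∧ (p.2 = 0 ∨ p.2 = 1) := by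
  by_cases h1 : p.2 = 1
  swap
  · exact (integral_of_snd_ne_one hp h1).imp_right .inl
  refine ⟨fun j => ?_, .inr h1⟩
  -- Shift each partial sum by its fractional part: differences equal to an integer are preserved.
  let X : ℕ → ℝ := fun k => ∑ i ∈ Finset.range k, if h : i < n then p.1 ⟨i, h⟩ else 0
  have hX : ∀ j : Fin n, p.1 j = X (j + 1) - X j := fun j => by
    simp [X, Finset.sum_range_succ]
  have hd : ((fun j => Int.fract (X (j + 1)) - Int.fract (X j), 0) : (Fin n → ℝ) × ℝ) = 0 := by
    refine eq_zero_of_mem_extremePoints_Pbar hp (fun j hj => ?_) (fun _ => rfl) ?_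
    · refine sub_eq_zero.2 (Int.fract_eq_fract.2 ?_)
      rw [← hX]
      rcases hj with h | h
      · exact ⟨0, by simp [h]⟩
      · exact ⟨1, by simp [h]⟩
    · intro S hSC htight
      rcases S.eq_empty_or_nonempty with rfl | hne
      · simp
      obtain ⟨a, b, hab⟩ := exists_sum_sub_eq_of_interval hne (hC S hSC)
      rw [Finset.sum_congr rfl fun j _ => hX j, hab, h1] at htight
      refine Eq.symm ((hab fun k => Int.fract (X k)).trans ?_)
      exact sub_eq_zero.2 (Int.fract_eq_fract.2 ⟨1, by simp [← htight]⟩)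
  have hj : Int.fract (X (j + 1)) - Int.fract (X j) = 0 := congrFun (congrArg Prod.fst hd) j
  obtain ⟨z, hz⟩ := Int.fract_eq_fract.1 (sub_eq_zero.1 hj)
  rw [← hX] at hz
  obtain ⟨h₀, h₁⟩ := hp.1.1 j
  rw [hz] at h₀ h₁ ⊢
  norm_cast at h₀ h₁ ⊢
  lia
end

section
/- Let N be a finite set, R a finite nonempty index set, for each r ∈ R let C_r be a finite family of subsets of N, let 𝒜 = {⋃_{r∈R} S_r : S_r ∈ C_r for each r ∈ R}, and fix f > 0. For x ∈ [0,1]^N define v^agg(x) = sup{ f·y : y ∈ [0,1], ∑_{j∈S} x_j ≥ y for every S ∈ 𝒜 } and v^disagg(x) = sup{ f·∑_{r∈R} z_r : z ∈ [0,1]^R, ∑_{r∈R} z_r ≤ 1, ∑_{j∈S} x_j ≥ z_r for every r ∈ R and every S ∈ C_r }. Then v^agg(x) ≤ v^disagg(x) for every x ∈ [0,1]^N. -/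
/-- The aggregated family `𝒜 = {⋃_{r∈R} S_r : S_r ∈ C_r for each r ∈ R}`. -/
def aggFamily {N R : Type*} [DecidableEq N] [Fintype R]
    (C : R → Finset (Finset N)) : Set (Finset N) :=
  {A | ∃ g : R → Finset N, (∀ r, g r ∈ C r) ∧ A = Finset.univ.sup g}

/-- `v^disagg(x) = sup{ f·∑_r z_r : z ∈ [0,1]^R, ∑_r z_r ≤ 1,
`∑_{j∈S} x_j ≥ z_r` for every `r ∈ R` and `S ∈ C_r }`. -/
noncomputable def vdisagg {N R : Type*} [Fintype R]
    (C : R → Finset (Finset N)) (f : ℝ) (x : N → ℝ) : ℝ :=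
  sSup {t | ∃ z : R → ℝ,
    (∀ r, z r ∈ Set.Icc (0 : ℝ) 1) ∧ (∑ r, z r) ≤ 1 ∧
    (∀ r, ∀ S ∈ C r, z r ≤ ∑ j ∈ S, x j) ∧
    t = f * ∑ r, z r}

/-- `v^agg(x) = sup{ f·y : y ∈ [0,1], ∑_{j∈S} x_j ≥ y for every S ∈ 𝒜 }`. -/
noncomputable def vagg {N : Type*} (A : Set (Finset N)) (f : ℝ) (x : N → ℝ) : ℝ :=
  sSup {t | ∃ y : ℝ, y ∈ Set.Icc (0 : ℝ) 1 ∧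
    (∀ S ∈ A, y ≤ ∑ j ∈ S, x j) ∧ t = f * y}

/-- A nonnegative vector can be shrunk coordinatewise so that its sum is any prescribed smaller
nonnegative value. -/
lemma exists_le_sum_eq {R : Type*} [Fintype R] (m : R → ℝ) (hm : ∀ r, 0 ≤ m r) (y : ℝ)
    (hy : 0 ≤ y) (hym : y ≤ ∑ r, m r) :
    ∃ z : R → ℝ, (∀ r, 0 ≤ z r ∧ z r ≤ m r) ∧ ∑ r, z r = y := by
  have hM : 0 ≤ ∑ r, m r := hy.trans hym
  refine ⟨fun r => y / (∑ r, m r) * m r, fun r => ⟨?_, ?_⟩, ?_⟩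
  · exact mul_nonneg (div_nonneg hy hM) (hm r)
  · exact mul_le_of_le_one_left (hm r) (div_le_one_of_le₀ hym hM)
  · rw [← Finset.mul_sum]
    exact div_mul_cancel_of_imp fun h => le_antisymm (h ▸ hym) hy

/-- The weight of a finite union is at most the sum of the weights. -/
lemma sum_sup_le_sum_sum {N R : Type*} [DecidableEq N] (s : Finset R) (g : R → Finset N)
    (x : N → ℝ) (hx : ∀ j, 0 ≤ x j) :
    ∑ j ∈ s.sup g, x j ≤ ∑ r ∈ s, ∑ j ∈ g r, x j := by
  induction s using Finset.cons_induction with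
  | empty => simp
  | cons r s hr ih =>
    rw [Finset.sup_cons, Finset.sum_cons, Finset.sup_eq_union]
    have hunion := Finset.sum_union_inter (s₁ := g r) (s₂ := s.sup g) (f := x)
    have hinter : 0 ≤ ∑ j ∈ g r ∩ s.sup g, x j := Finset.sum_nonneg fun j _ => hx j
    linarith

/-- The least weight of a member of a finite family, with value `1` for the empty family. -/
lemma exists_min_weight {N : Type*} (C : Finset (Finset N)) (x : N → ℝ) (hx : ∀ j, 0 ≤ x j) :
    ∃ m : ℝ, 0 ≤ m ∧ (∀ S ∈ C, m ≤ ∑ j ∈ S, x j) ∧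
      (C.Nonempty → ∃ S ∈ C, ∑ j ∈ S, x j = m) ∧ (¬ C.Nonempty → m = 1) := by
  by_cases hC : C.Nonempty
  · obtain ⟨S, hS, hmin⟩ := C.exists_min_image (fun S => ∑ j ∈ S, x j) hC
    exact ⟨_, Finset.sum_nonneg fun j _ => hx j, hmin, fun _ => ⟨S, hS, rfl⟩, fun h => (h hC).elim⟩
  · exact ⟨1, zero_le_one, fun S hS => (hC ⟨S, hS⟩).elim, fun h => (hC h).elim, fun _ => rfl⟩

/-- Proposition 3(i) of the paper.
For every `x ∈ [0,1]^N`, `v^agg(x) ≤ v^disagg(x)`. -/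
theorem stmt_9 {N R : Type*} [Fintype N] [DecidableEq N] [Fintype R] [Nonempty R]
    (C : R → Finset (Finset N)) (f : ℝ) (hf : 0 < f)
    (x : N → ℝ) (hx : ∀ j, x j ∈ Set.Icc (0 : ℝ) 1) :
    vagg (aggFamily C) f x ≤ vdisagg C f x := by
  have hx0 : ∀ j, 0 ≤ x j := fun j => (hx j).1
  refine csSup_le_csSup ⟨f, ?_⟩ ⟨0, 0, by simp, fun S _ => Finset.sum_nonneg fun j _ => hx0 j,
    by simp⟩ ?_
  · rintro t ⟨z, -, hz, -, rfl⟩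
    exact mul_le_of_le_one_right hf.le hz
  rintro t ⟨y, ⟨hy0, hy1⟩, hy, rfl⟩
  choose m hm0 hmle hmne hmempty using fun r => exists_min_weight (C r) x hx0
  have hym : y ≤ ∑ r, m r := by
    by_cases h : ∀ r, (C r).Nonempty
    · choose g hg hgm using fun r => hmne r (h r)
      calc y ≤ ∑ j ∈ Finset.univ.sup g, x j := hy _ ⟨g, hg, rfl⟩
        _ ≤ ∑ r, ∑ j ∈ g r, x j := sum_sup_le_sum_sum _ g x hx0
        _ = ∑ r, m r := Finset.sum_congr rfl fun r _ => hgm r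
    · obtain ⟨r, hr⟩ := not_forall.mp h
      calc y ≤ 1 := hy1
        _ = m r := (hmempty r hr).symm
        _ ≤ ∑ r, m r := Finset.single_le_sum (fun r _ => hm0 r) (Finset.mem_univ r)
  obtain ⟨z, hz, hzy⟩ := exists_le_sum_eq m hm0 y hy0 hym
  refine ⟨z, fun r => ⟨(hz r).1, ?_⟩, hzy.trans_le hy1,
    fun r S hS => (hz r).2.trans (hmle r S hS), by rw [hzy]⟩
  exact (Finset.single_le_sum (fun r _ => (hz r).1) (Finset.mem_univ r)).trans (hzy.trans_le hy1)
end

section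
/- Let n be a positive integer. Let N = {1,…,2n}, R = {1,…,n}, and for each r ∈ R let C_r = { {1}, {r+1}, {n+2}, {n+3}, …, {2n} } (a family of singletons). Let 𝒜 = {⋃_{r∈R} S_r : S_r ∈ C_r for each r ∈ R}. Fix f > 0 and define v^agg(x) = sup{ f·y : y ∈ [0,1], ∑_{j∈S} x_j ≥ y for every S ∈ 𝒜 }. Then for every x ∈ [0,1]^{2n} with ∑_{j=1}^{2n} x_j ≤ 2, one has v^agg(x) ≤ 2f/(n+1). -/
/-- The instance of Proposition 4(i): nodes `N = {1,…,2n}` (labelled by naturals),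
demands indexed by `r ∈ R = {1,…,n}` (modelled as `Fin n`, with `r ↦ r.val + 1`), and
`C_r = { {1}, {r+1}, {n+2}, {n+3}, …, {2n} }`, a family of singletons. -/
def C1 (n : ℕ) : Fin n → Finset (Finset ℕ) := fun r =>
  insert {1} (insert {(r : ℕ) + 2}
    ((Finset.Icc (n + 2) (2 * n)).image fun k => ({k} : Finset ℕ)))

/-- A set common to all the families `C r` belongs to the aggregated family. -/
theorem mem_aggFamily_of_forall_mem {N R : Type*} [DecidableEq N] [Fintype R] [Nonempty R]
    {C : R → Finset (Finset N)} {S : Finset N} (hS : ∀ r, S ∈ C r) : S ∈ aggFamily C :=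
  ⟨fun _ => S, hS, (Finset.sup_const Finset.univ_nonempty S).symm⟩

theorem Ico_mem_aggFamily_C1 (n : ℕ) : Finset.Ico 2 (n + 2) ∈ aggFamily (C1 n) := by
  refine ⟨fun r => {(r : ℕ) + 2}, fun r => by simp [C1], ?_⟩
  ext a
  simp only [Finset.mem_Ico, Finset.mem_sup, Finset.mem_univ, true_and, Finset.mem_singleton]
  exact ⟨fun h => ⟨⟨a - 2, by omega⟩, by simp only; omega⟩, fun ⟨r, hr⟩ => by omega⟩

/-- The sets `{1}`, `{2, …, n+1}`, `{n+2}`, …, `{2n}` of the aggregated family partition the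
nodes, so a common lower bound `y` of their weights is at most an `(n+1)`-st of the total. -/
theorem add_one_mul_le_sum_of_forall_mem_aggFamily_C1 {n : ℕ} (hn : 0 < n) {x : ℕ → ℝ} {y : ℝ}
    (hy : ∀ S ∈ aggFamily (C1 n), y ≤ ∑ j ∈ S, x j) :
    ((n : ℝ) + 1) * y ≤ ∑ j ∈ Finset.Icc 1 (2 * n), x j := by
  have : Nonempty (Fin n) := ⟨⟨0, hn⟩⟩
  have h_one : y ≤ x 1 := by
    simpa using hy {1} (mem_aggFamily_of_forall_mem fun r => by simp [C1])
  have h_mid := hy _ (Ico_mem_aggFamily_C1 n)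
  have h_tail : ((n : ℝ) - 1) * y ≤ ∑ j ∈ Finset.Ico (n + 2) (2 * n + 1), x j := by
    have h := Finset.card_nsmul_le_sum (Finset.Ico (n + 2) (2 * n + 1)) x y fun j hj => by
      have hj := Finset.mem_Ico.1 hj
      simpa using hy {j} (mem_aggFamily_of_forall_mem fun r => by
        simp only [C1, Finset.mem_insert, Finset.mem_image, Finset.mem_Icc]
        exact Or.inr (Or.inr ⟨j, by omega, rfl⟩))
    rwa [Nat.card_Ico, show 2 * n + 1 - (n + 2) = n - 1 by omega, nsmul_eq_mul,
      Nat.cast_pred hn] at h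
  have h_split : ∑ j ∈ Finset.Icc 1 (2 * n), x j =
      x 1 + ∑ j ∈ Finset.Ico 2 (n + 2), x j + ∑ j ∈ Finset.Ico (n + 2) (2 * n + 1), x j := by
    rw [← Finset.Ico_add_one_right_eq_Icc, Finset.sum_eq_sum_Ico_succ_bot (by omega), add_assoc,
      Finset.sum_Ico_consecutive x (by omega) (by omega)]
  linarith

/-- upper bound in the proof of Proposition 4(i) of the paper.
On the instance `C1 n`, every `x ∈ [0,1]^{2n}` with `∑_{j=1}^{2n} x_j ≤ 2` satisfies
`v^agg(x) ≤ 2f/(n+1)`. -/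
theorem stmt_15 (n : ℕ) (hn : 0 < n) (f : ℝ) (hf : 0 < f) (x : ℕ → ℝ)
    (hx : ∀ j ∈ Finset.Icc 1 (2 * n), x j ∈ Set.Icc (0 : ℝ) 1)
    (hb : (∑ j ∈ Finset.Icc 1 (2 * n), x j) ≤ 2) :
    vagg (aggFamily (C1 n)) f x ≤ 2 * f / ((n : ℝ) + 1) := by
  refine Real.sSup_le ?_ (by positivity)
  rintro _ ⟨y, -, hy, rfl⟩
  rw [le_div_iff₀ (by positivity)]
  have h := (add_one_mul_le_sum_of_forall_mem_aggFamily_C1 hn hy).trans hb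
  linarith [mul_le_mul_of_nonneg_left h hf.le]
end

section
/- Let γ > 1 be a real number and let n be an integer with n ≥ max(6γ, 2). Set m = 2n+4 and let 𝒜 = { {1}, {2}, {2n+3}, {2n+4} } ∪ { S ⊆ {3,…,2n+2} : |S| = n }. Fix f > 0, define v^agg(x) = max{ f·y : y ∈ [0,1], ∑_{j∈S} x_j ≥ y for every S ∈ 𝒜 } for x ∈ [0,1]^m, and let g be the concavification of the restriction of v^agg to {0,1}^m, i.e., g(x) = max{ ∑_{β∈{0,1}^m} α_β v^agg(β) : α_β ≥ 0, ∑_β α_β = 1, ∑_β α_β β = x }. With X̄ = { x ∈ [0,1]^m : ∑_{j=1}^{m} x_j ≤ 6 }, it holds that γ · sup_{x∈X̄} g(x) ≤ sup_{x∈X̄} v^agg(x). -/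
/-- The indicator vector (in `{0,1}^ℕ`) of a finite set `T` of node labels. -/
def indVec (T : Finset ℕ) : ℕ → ℝ := fun j => if j ∈ T then 1 else 0

/-- The concavification of `h : {0,1}^m → ℝ`, where binary vectors on the node set
`{1,…,m}` are identified with subsets `T ⊆ {1,…,m}`:
`g(x) = max{ ∑_β α_β h(β) : α ≥ 0, ∑_β α_β = 1, ∑_β α_β β = x }`. -/
noncomputable def concavifyN (m : ℕ) (h : Finset ℕ → ℝ) (x : ℕ → ℝ) : ℝ :=
  sSup {t | ∃ α : Finset ℕ → ℝ,
    (∀ T ∈ (Finset.Icc 1 m).powerset, 0 ≤ α T) ∧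
    (∑ T ∈ (Finset.Icc 1 m).powerset, α T) = 1 ∧
    (∀ j ∈ Finset.Icc 1 m, (∑ T ∈ (Finset.Icc 1 m).powerset, α T * indVec T j) = x j) ∧
    t = ∑ T ∈ (Finset.Icc 1 m).powerset, α T * h T}

/-- The family of Proposition 4(ii): on the nodes `{1,…,2n+4}` (labelled by naturals),
`𝒜 = { {1}, {2}, {2n+3}, {2n+4} } ∪ { S ⊆ {3,…,2n+2} : |S| = n }`. -/
def A2 (n : ℕ) : Set (Finset ℕ) :=
  ({ {1}, {2}, {2 * n + 3}, {2 * n + 4} } : Set (Finset ℕ)) ∪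
    {S : Finset ℕ | S ⊆ Finset.Icc 3 (2 * n + 2) ∧ S.card = n}

theorem sum_indVec (S T : Finset ℕ) : ∑ j ∈ S, indVec T j = ((S ∩ T).card : ℝ) := by
  simp [indVec, Finset.sum_ite_mem]

theorem vagg_le {N : Type*} (A : Set (Finset N)) {f : ℝ} (hf : 0 ≤ f) (x : N → ℝ) :
    vagg A f x ≤ f := by
  refine Real.sSup_le ?_ hf
  rintro _ ⟨y, hy, -, rfl⟩
  exact mul_le_of_le_one_right hf hy.2

theorem vagg_nonpos {N : Type*} {A : Set (Finset N)} {f : ℝ} (hf : 0 ≤ f) {x : N → ℝ}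
    {S : Finset N} (hS : S ∈ A) (hx : ∑ j ∈ S, x j ≤ 0) : vagg A f x ≤ 0 := by
  refine Real.sSup_le ?_ le_rfl
  rintro _ ⟨y, -, hyA, rfl⟩
  exact mul_nonpos_of_nonneg_of_nonpos hf ((hyA S hS).trans hx)

theorem le_vagg {N : Type*} {A : Set (Finset N)} {f : ℝ} (hf : 0 ≤ f) {x : N → ℝ}
    (hx : ∀ S ∈ A, 1 ≤ ∑ j ∈ S, x j) : f ≤ vagg A f x := by
  refine le_csSup ⟨f, ?_⟩ ⟨1, by simp, hx, by simp⟩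
  rintro _ ⟨y, hy, -, rfl⟩
  exact mul_le_of_le_one_right hf hy.2

/-- If `h T ≤ c * |T|`, the concavification of `h` is at most `c * ∑ x_j`. -/
theorem concavifyN_le {m : ℕ} {h : Finset ℕ → ℝ} {x : ℕ → ℝ} {c : ℝ} (hc : 0 ≤ c)
    (hx : 0 ≤ ∑ j ∈ Finset.Icc 1 m, x j)
    (hh : ∀ T ⊆ Finset.Icc 1 m, h T ≤ c * T.card) :
    concavifyN m h x ≤ c * ∑ j ∈ Finset.Icc 1 m, x j := by
  refine Real.sSup_le ?_ (mul_nonneg hc hx)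
  rintro _ ⟨α, hα, -, hαx, rfl⟩
  calc ∑ T ∈ (Finset.Icc 1 m).powerset, α T * h T
      ≤ ∑ T ∈ (Finset.Icc 1 m).powerset, α T * (c * ∑ j ∈ Finset.Icc 1 m, indVec T j) := by
        refine Finset.sum_le_sum fun T hT => mul_le_mul_of_nonneg_left ?_ (hα T hT)
        have hT' := Finset.mem_powerset.mp hT
        rw [sum_indVec, Finset.inter_eq_right.mpr hT']
        exact hh T hT'
    _ = c * ∑ j ∈ Finset.Icc 1 m, ∑ T ∈ (Finset.Icc 1 m).powerset, α T * indVec T j := by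
        rw [Finset.sum_comm, Finset.mul_sum]
        refine Finset.sum_congr rfl fun T _ => ?_
        rw [← Finset.mul_sum]
        ring
    _ = c * ∑ j ∈ Finset.Icc 1 m, x j := by rw [Finset.sum_congr rfl hαx]

/-- A set with fewer than `n` nodes misses some `n` of the `2n` middle nodes, so its value is `0`. -/
theorem vagg_indVec_le {n : ℕ} (hn : 0 < n) {f : ℝ} (hf : 0 ≤ f) (T : Finset ℕ) :
    vagg (A2 n) f (indVec T) ≤ f / n * T.card := by
  have hn' : (0 : ℝ) < n := by exact_mod_cast hn
  by_cases hT : n ≤ T.card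
  · refine (vagg_le _ hf _).trans ?_
    rw [div_mul_eq_mul_div, le_div_iff₀ hn']
    exact mul_le_mul_of_nonneg_left (by exact_mod_cast hT) hf
  · have hcard : n ≤ (Finset.Icc 3 (2 * n + 2) \ T).card := by
      have := Finset.le_card_sdiff T (Finset.Icc 3 (2 * n + 2))
      rw [Nat.card_Icc] at this
      omega
    obtain ⟨S, hS, hSn⟩ := Finset.exists_subset_card_eq hcard
    have hdisj : Disjoint S T := Finset.disjoint_of_subset_left hS Finset.sdiff_disjoint
    refine (vagg_nonpos hf (S := S) (Or.inr ⟨hS.trans Finset.sdiff_subset, hSn⟩) ?_).trans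
      (by positivity)
    rw [sum_indVec, Finset.disjoint_iff_inter_eq_empty.mp hdisj]
    simp

/-- The fractional point with value `1` on the singleton nodes and `1/n` on the middle nodes. -/
noncomputable def fracPoint (n : ℕ) (j : ℕ) : ℝ :=
  if j ∈ Finset.Icc 3 (2 * n + 2) then 1 / n else 1

theorem fracPoint_mem_Icc {n : ℕ} (hn : 0 < n) (j : ℕ) :
    fracPoint n j ∈ Set.Icc (0 : ℝ) 1 := by
  have h1 : (1 : ℝ) ≤ n := by exact_mod_cast hn
  unfold fracPoint
  split_ifs
  · exact ⟨by positivity, (div_le_one (by linarith)).mpr h1⟩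
  · simp

theorem sum_fracPoint {n : ℕ} (hn : 0 < n) :
    ∑ j ∈ Finset.Icc 1 (2 * n + 4), fracPoint n j = 6 := by
  have hn' : (n : ℝ) ≠ 0 := by exact_mod_cast hn.ne'
  have hsub : Finset.Icc 3 (2 * n + 2) ⊆ Finset.Icc 1 (2 * n + 4) :=
    Finset.Icc_subset_Icc (by omega) (by omega)
  rw [← Finset.sum_sdiff hsub,
    Finset.sum_congr rfl (f := fracPoint n) (g := fun _ => (1 : ℝ))
      fun j hj => if_neg (Finset.mem_sdiff.mp hj).2,
    Finset.sum_congr rfl (f := fracPoint n) (g := fun _ => 1 / (n : ℝ))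
      fun j hj => if_pos hj,
    Finset.sum_const, Finset.sum_const, Finset.card_sdiff_of_subset hsub, Nat.card_Icc,
    Nat.card_Icc, show 2 * n + 4 + 1 - 1 - (2 * n + 2 + 1 - 3) = 4 by omega,
    show 2 * n + 2 + 1 - 3 = 2 * n by omega]
  simp only [nsmul_eq_mul]
  push_cast
  field_simp
  norm_num

theorem one_le_sum_fracPoint {n : ℕ} (hn : 0 < n) {S : Finset ℕ} (hS : S ∈ A2 n) :
    1 ≤ ∑ j ∈ S, fracPoint n j := by
  have hn' : (n : ℝ) ≠ 0 := by exact_mod_cast hn.ne'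
  rcases hS with (rfl | rfl | rfl | rfl) | ⟨hS, hSn⟩
  · simp [fracPoint]
  · simp [fracPoint]
  · simp [fracPoint]
  · simp [fracPoint]
  · rw [Finset.sum_congr rfl (f := fracPoint n) (g := fun _ => 1 / (n : ℝ))
      fun j hj => if_pos (hS hj),
      Finset.sum_const, hSn, nsmul_eq_mul, mul_one_div_cancel hn']

/-- Proposition 4(ii) of the paper.
For `γ > 1` and an integer `n ≥ max(6γ, 2)`, on the instance `A2 n` with `m = 2n+4` and
budget set `X̄ = {x ∈ [0,1]^m : ∑_{j=1}^m x_j ≤ 6}`, the bound from the tightest concave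
relaxation (the concavification `g` of the restriction of `v^agg` to binary points)
times `γ` is still at most the bound from the aggregated LP relaxation. -/
theorem stmt_16 (γ : ℝ) (hγ : 1 < γ) (n : ℕ) (hn2 : 2 ≤ n) (hnγ : 6 * γ ≤ (n : ℝ))
    (f : ℝ) (hf : 0 < f) :
    γ * sSup {t | ∃ x : ℕ → ℝ,
        (∀ j ∈ Finset.Icc 1 (2 * n + 4), x j ∈ Set.Icc (0 : ℝ) 1) ∧
        (∑ j ∈ Finset.Icc 1 (2 * n + 4), x j) ≤ 6 ∧
        t = concavifyN (2 * n + 4) (fun T => vagg (A2 n) f (indVec T)) x}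
      ≤ sSup {t | ∃ x : ℕ → ℝ,
        (∀ j ∈ Finset.Icc 1 (2 * n + 4), x j ∈ Set.Icc (0 : ℝ) 1) ∧
        (∑ j ∈ Finset.Icc 1 (2 * n + 4), x j) ≤ 6 ∧
        t = vagg (A2 n) f x} := by
  have hn : 0 < n := by omega
  have hn' : (0 : ℝ) < n := by exact_mod_cast hn
  refine le_trans (b := f) ?_ ?_
  · have hle : γ * (f / n * 6) ≤ f := by
      rw [show γ * (f / n * 6) = f * (6 * γ) / n by ring, div_le_iff₀ hn']
      exact mul_le_mul_of_nonneg_left hnγ hf.le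
    refine le_trans (mul_le_mul_of_nonneg_left ?_ (by linarith)) hle
    refine Real.sSup_le ?_ (by positivity)
    rintro _ ⟨x, hx, hsum, rfl⟩
    have hc : 0 ≤ f / n := by positivity
    exact (concavifyN_le hc (Finset.sum_nonneg fun j hj => (hx j hj).1)
      fun T _ => vagg_indVec_le hn hf.le T).trans (mul_le_mul_of_nonneg_left hsum hc)
  · refine (le_vagg hf.le fun S hS => one_le_sum_fracPoint hn hS).trans (le_csSup ⟨f, ?_⟩
      ⟨fracPoint n, fun j _ => fracPoint_mem_Icc hn j, (sum_fracPoint hn).le, rfl⟩)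
    rintro _ ⟨x, -, -, rfl⟩
    exact vagg_le _ hf.le x
end

section
/- Let N be a finite set, R a finite nonempty index set, for each r ∈ R let C_r be a finite family of subsets of N, let 𝒜 = {⋃_{r∈R} S_r : S_r ∈ C_r for each r ∈ R}, and fix f > 0. Then for every binary vector x ∈ {0,1}^N, v^disagg(x) = v^agg(x); moreover this common value equals f if there exists r ∈ R with ∑_{j∈S} x_j ≥ 1 for every S ∈ C_r, and equals 0 otherwise. Here v^disagg(x) = sup{ f·∑_{r∈R} z_r : z ∈ [0,1]^R, ∑_r z_r ≤ 1, ∑_{j∈S} x_j ≥ z_r for every r ∈ R, S ∈ C_r } and v^agg(x) = sup{ f·y : y ∈ [0,1], ∑_{j∈S} x_j ≥ y for every S ∈ 𝒜 }. -/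
/-- A set with binary weights and total weight less than one carries no weight. -/
lemma eq_zero_of_sum_lt_one {N : Type*} {x : N → ℝ} (hx : ∀ j, x j = 0 ∨ x j = 1)
    {S : Finset N} (hS : ∑ j ∈ S, x j < 1) : ∀ j ∈ S, x j = 0 := by
  intro j hj
  have hnonneg : ∀ i ∈ S, 0 ≤ x i := fun i _ => by rcases hx i with h | h <;> simp [h]
  have hle := Finset.single_le_sum hnonneg hj
  exact (hx j).resolve_right fun h => by linarith

lemma vdisagg_eq_of_served {N R : Type*} [Fintype R] {C : R → Finset (Finset N)} {f : ℝ}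
    (hf : 0 ≤ f) {x : N → ℝ} (hx : ∀ j, 0 ≤ x j)
    (h : ∃ r : R, ∀ S ∈ C r, 1 ≤ ∑ j ∈ S, x j) : vdisagg C f x = f := by
  classical
  obtain ⟨r, hr⟩ := h
  refine IsGreatest.csSup_eq ⟨⟨Pi.single r 1, fun s => ?_, by simp, fun s S hS => ?_, by simp⟩, ?_⟩
  · by_cases hs : s = r
    · subst hs; simp
    · simp [hs]
  · by_cases hs : s = r
    · subst hs; simpa using hr S hS
    · simpa [hs] using Finset.sum_nonneg fun j _ => hx j
  · rintro _ ⟨z, -, hz, -, rfl⟩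
    exact mul_le_of_le_one_right hf hz

lemma vagg_aggFamily_eq_of_served {N R : Type*} [DecidableEq N] [Fintype R]
    {C : R → Finset (Finset N)} {f : ℝ} (hf : 0 ≤ f) {x : N → ℝ} (hx : ∀ j, 0 ≤ x j)
    (h : ∃ r : R, ∀ S ∈ C r, 1 ≤ ∑ j ∈ S, x j) : vagg (aggFamily C) f x = f := by
  obtain ⟨r, hr⟩ := h
  refine IsGreatest.csSup_eq ⟨⟨1, by simp, ?_, by simp⟩, ?_⟩
  · rintro _ ⟨g, hg, rfl⟩
    exact (hr _ (hg r)).trans (Finset.sum_le_sum_of_subset_of_nonneg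
      (Finset.le_sup (f := g) (Finset.mem_univ r)) fun j _ _ => hx j)
  · rintro _ ⟨y, hy, -, rfl⟩
    exact mul_le_of_le_one_right hf hy.2

lemma vdisagg_eq_zero_of_not_served {N R : Type*} [Fintype R] {C : R → Finset (Finset N)}
    {f : ℝ} {x : N → ℝ} (hx : ∀ j, x j = 0 ∨ x j = 1)
    (h : ¬ ∃ r : R, ∀ S ∈ C r, 1 ≤ ∑ j ∈ S, x j) : vdisagg C f x = 0 := by
  have hx0 : ∀ j, 0 ≤ x j := fun j => by rcases hx j with h | h <;> simp [h]
  push Not at h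
  refine IsGreatest.csSup_eq ⟨⟨0, by simp, by simp,
    fun r S _ => Finset.sum_nonneg fun j _ => hx0 j, by simp⟩, ?_⟩
  rintro _ ⟨z, hz, -, hzC, rfl⟩
  have hz0 : ∀ r, z r = 0 := fun r => by
    obtain ⟨S, hS, hlt⟩ := h r
    have hle := hzC r S hS
    rw [Finset.sum_eq_zero (eq_zero_of_sum_lt_one hx hlt)] at hle
    exact le_antisymm hle (hz r).1
  simp [hz0]

lemma vagg_aggFamily_eq_zero_of_not_served {N R : Type*} [DecidableEq N] [Fintype R]
    {C : R → Finset (Finset N)} {f : ℝ} {x : N → ℝ} (hx : ∀ j, x j = 0 ∨ x j = 1)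
    (h : ¬ ∃ r : R, ∀ S ∈ C r, 1 ≤ ∑ j ∈ S, x j) : vagg (aggFamily C) f x = 0 := by
  have hx0 : ∀ j, 0 ≤ x j := fun j => by rcases hx j with h | h <;> simp [h]
  push Not at h
  choose g hg hlt using h
  refine IsGreatest.csSup_eq ⟨⟨0, by simp, fun S _ => Finset.sum_nonneg fun j _ => hx0 j,
    by simp⟩, ?_⟩
  rintro _ ⟨y, hy, hyA, rfl⟩
  have hle := hyA _ ⟨g, hg, rfl⟩
  rw [Finset.sum_eq_zero fun j hj => ?_] at hle
  · simp [le_antisymm hle hy.1]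
  · obtain ⟨r, -, hr⟩ := Finset.mem_sup.mp hj
    exact eq_zero_of_sum_lt_one hx (hlt r) j hr

/-- claim in Section 3 of the paper.
For every binary vector `x ∈ {0,1}^N`, `v^disagg(x) = v^agg(x)`; moreover the common
value equals `f` if there exists `r ∈ R` with `∑_{j∈S} x_j ≥ 1` for every `S ∈ C_r`,
and equals `0` otherwise. -/
theorem stmt_19 {N R : Type*} [Fintype N] [DecidableEq N] [Fintype R] [Nonempty R]
    (C : R → Finset (Finset N)) (f : ℝ) (hf : 0 < f)
    (x : N → ℝ) (hx : ∀ j, x j = 0 ∨ x j = 1) :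
    vdisagg C f x = vagg (aggFamily C) f x ∧
    ((∃ r : R, ∀ S ∈ C r, 1 ≤ ∑ j ∈ S, x j) → vagg (aggFamily C) f x = f) ∧
    (¬ (∃ r : R, ∀ S ∈ C r, 1 ≤ ∑ j ∈ S, x j) → vagg (aggFamily C) f x = 0) := by
  have hx0 : ∀ j, 0 ≤ x j := fun j => by rcases hx j with h | h <;> simp [h]
  refine ⟨?_, vagg_aggFamily_eq_of_served hf.le hx0, vagg_aggFamily_eq_zero_of_not_served hx⟩
  by_cases h : ∃ r : R, ∀ S ∈ C r, 1 ≤ ∑ j ∈ S, x j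
  · rw [vdisagg_eq_of_served hf.le hx0 h, vagg_aggFamily_eq_of_served hf.le hx0 h]
  · rw [vdisagg_eq_zero_of_not_served hx h, vagg_aggFamily_eq_zero_of_not_served hx h]
end
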